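/- arXiv:2502.17016 — 7 statements merged into one kernel-verified Lean document; each statement's English description precedes it below -/
import Mathlib

section
/- Let n ≥ 1. The linear map Ψ : 𝔤_0 → M_n(ℝ) defined by Ψ(M(a,0,0,A)) := A − a·I is injective, is a Lie algebra homomorphism (Ψ([B,B']) = [Ψ(B), Ψ(B')] for the matrix commutators), has image exactly the conformal Lie algebra 𝔠𝔬(n) := {N ∈ M_n(ℝ) : N + Nᵀ is a scalar multiple of the identity}, and intertwines the adjoint action on 𝔤_{−1} with the standard action on ℝ^n: for all B ∈ 𝔤_0 and X ∈ ℝ^n, [B, M(0,X,0,0)] = M(0, Ψ(B)·X, 0, 0). -/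
/-!
Elements of `𝔤_0` are the block diagonal matrices `diag(a, A, -a)` with `A` skew-symmetric, so their
commutators are computed blockwise (`lie_Mmat_zero`) and the scalar part `a` drops out; as `a • 1` is
central in `M_n(ℝ)`, `Ψ` respects brackets. A skew-symmetric matrix has zero diagonal, so any
diagonal entry of `A - a • 1` recovers `a`, which gives injectivity when `n ≥ 1`. The image is
the set of sums of a skew-symmetric and a scalar matrix, which is `𝔠𝔬(n)`: if `N + Nᵀ = c • 1`,
then `N - (c / 2) • 1` is skew. The intertwining property is a block computation
(`lie_Mmat_gMinus`), with skewness of `A` needed only in the last row.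
-/

open Matrix

/-- The index type for `(n+2) × (n+2)` matrices in `(1,n,1)` block form:
the first index `0`, the middle indices `1, …, n` and the last index `n+1`. -/
abbrev ConfIdx (n : ℕ) := Fin 1 ⊕ (Fin n ⊕ Fin 1)

/-- The Lorentzian bilinear form `b(x,y) = x_0 y_{n+1} + x_{n+1} y_0 + ∑_{i=1}^n x_i y_i`
on `ℝ^{n+2}`. -/
def bForm (n : ℕ) (x y : ConfIdx n → ℝ) : ℝ :=
  x (Sum.inl 0) * y (Sum.inr (Sum.inr 0)) + x (Sum.inr (Sum.inr 0)) * y (Sum.inl 0) +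
    ∑ i : Fin n, x (Sum.inr (Sum.inl i)) * y (Sum.inr (Sum.inl i))

/-- The `(n+2) × (n+2)` matrix `M(a,X,Z,A)` in `(1,n,1)` block form with rows
`(a, Z, 0; X, A, −Zᵀ; 0, −Xᵀ, −a)`. -/
def Mmat (n : ℕ) (a : ℝ) (X Z : Fin n → ℝ) (A : Matrix (Fin n) (Fin n) ℝ) :
    Matrix (ConfIdx n) (ConfIdx n) ℝ :=
  Matrix.of fun i j =>
    match i, j with
    | Sum.inl _, Sum.inl _ => a
    | Sum.inl _, Sum.inr (Sum.inl j) => Z j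
    | Sum.inl _, Sum.inr (Sum.inr _) => 0
    | Sum.inr (Sum.inl i), Sum.inl _ => X i
    | Sum.inr (Sum.inl i), Sum.inr (Sum.inl j) => A i j
    | Sum.inr (Sum.inl i), Sum.inr (Sum.inr _) => -Z i
    | Sum.inr (Sum.inr _), Sum.inl _ => 0
    | Sum.inr (Sum.inr _), Sum.inr (Sum.inl j) => -X j
    | Sum.inr (Sum.inr _), Sum.inr (Sum.inr _) => -a

/-- The Lie algebra `𝔬(b)` of all matrices `B` with `b(Bx,y) + b(x,By) = 0`,
as a subset of the ring of `(n+2) × (n+2)` matrices (with commutator bracket `⁅·,·⁆`). -/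
def oLie (n : ℕ) : Set (Matrix (ConfIdx n) (ConfIdx n) ℝ) :=
  {B | ∀ x y : ConfIdx n → ℝ, bForm n (B.mulVec x) y + bForm n x (B.mulVec y) = 0}

/-- The grading component `𝔤_{−1} = {M(0,X,0,0)}`. -/
def gMinus (n : ℕ) : Set (Matrix (ConfIdx n) (ConfIdx n) ℝ) :=
  {B | ∃ X : Fin n → ℝ, B = Mmat n 0 X 0 0}

/-- The grading component `𝔤_0 = {M(a,0,0,A) : Aᵀ = −A}`. -/
def gZero (n : ℕ) : Set (Matrix (ConfIdx n) (ConfIdx n) ℝ) :=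
  {B | ∃ (a : ℝ) (A : Matrix (Fin n) (Fin n) ℝ), Aᵀ = -A ∧ B = Mmat n a 0 0 A}

/-- The grading component `𝔤_1 = {M(0,0,Z,0)}`. -/
def gPlus (n : ℕ) : Set (Matrix (ConfIdx n) (ConfIdx n) ℝ) :=
  {B | ∃ Z : Fin n → ℝ, B = Mmat n 0 0 Z 0}

/-- The map `Ψ : 𝔤_0 → M_n(ℝ)`, `Ψ(M(a,0,0,A)) = A − a·I`, written in terms of the
entries of the argument (the middle `n × n` block minus the upper left entry times the
identity). -/
def PsiConf (n : ℕ) (B : Matrix (ConfIdx n) (ConfIdx n) ℝ) : Matrix (Fin n) (Fin n) ℝ :=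
  Matrix.of (fun i j => B (Sum.inr (Sum.inl i)) (Sum.inr (Sum.inl j))) -
    B (Sum.inl 0) (Sum.inl 0) • (1 : Matrix (Fin n) (Fin n) ℝ)

/-- The conformal Lie algebra `𝔠𝔬(n) = {N : N + Nᵀ is a scalar multiple of the identity}`. -/
def coLie (n : ℕ) : Set (Matrix (Fin n) (Fin n) ℝ) :=
  {N | ∃ c : ℝ, N + Nᵀ = c • (1 : Matrix (Fin n) (Fin n) ℝ)}

theorem PsiConf_Mmat (n : ℕ) (a : ℝ) (X Z : Fin n → ℝ) (A : Matrix (Fin n) (Fin n) ℝ) :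
    PsiConf n (Mmat n a X Z A) = A - a • (1 : Matrix (Fin n) (Fin n) ℝ) := rfl

theorem lie_Mmat_zero (n : ℕ) (a a' : ℝ) (A A' : Matrix (Fin n) (Fin n) ℝ) :
    ⁅Mmat n a 0 0 A, Mmat n a' 0 0 A'⁆ = Mmat n 0 0 0 ⁅A, A'⁆ := by
  ext i j
  rcases i with i | i | i <;> rcases j with j | j | j <;>
    simp [Mmat, Ring.lie_def, Matrix.mul_apply, mul_comm]

theorem lie_Mmat_gMinus (n : ℕ) (a : ℝ) (A : Matrix (Fin n) (Fin n) ℝ) (hA : Aᵀ = -A)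
    (X : Fin n → ℝ) :
    ⁅Mmat n a 0 0 A, Mmat n 0 X 0 0⁆ =
      Mmat n 0 ((A - a • (1 : Matrix (Fin n) (Fin n) ℝ)).mulVec X) 0 0 := by
  have hskew (i j : Fin n) : A i j = -A j i := by
    simpa using congrFun (congrFun hA j) i
  rw [Matrix.sub_mulVec, Matrix.smul_mulVec, Matrix.one_mulVec]
  ext i j
  rcases i with i | i | i <;> rcases j with j | j | j <;>
    simp [Mmat, Ring.lie_def, Matrix.mul_apply, Matrix.mulVec, dotProduct, mul_comm]
  -- The block in the last row and middle column, the only one that needs `Xᵀ A = -(A X)ᵀ`.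
  have h : ∑ k, A k j * X k = -∑ k, A j k * X k := by
    rw [← Finset.sum_neg_distrib]
    exact Finset.sum_congr rfl fun k _ => by rw [hskew k j, neg_mul]
  linarith

/-- `Ψ(M(a,0,0,A)) = A − a·I` is injective on `𝔤_0`, is a Lie algebra
homomorphism for the commutator brackets, has image exactly `𝔠𝔬(n)`, and intertwines
the adjoint action on `𝔤_{−1}` with the standard action on `ℝ^n`. -/
theorem stmt4 (n : ℕ) (hn : 1 ≤ n) :
    (∀ (a : ℝ) (A : Matrix (Fin n) (Fin n) ℝ),
      PsiConf n (Mmat n a 0 0 A) = A - a • (1 : Matrix (Fin n) (Fin n) ℝ)) ∧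
    Set.InjOn (PsiConf n) (gZero n) ∧
    (∀ B ∈ gZero n, ∀ B' ∈ gZero n, PsiConf n ⁅B, B'⁆ = ⁅PsiConf n B, PsiConf n B'⁆) ∧
    PsiConf n '' gZero n = coLie n ∧
    (∀ B ∈ gZero n, ∀ X : Fin n → ℝ,
      ⁅B, Mmat n 0 X 0 0⁆ = Mmat n 0 ((PsiConf n B).mulVec X) 0 0) := by
  refine ⟨fun a A => PsiConf_Mmat n a 0 0 A, ?_, ?_, ?_, ?_⟩
  · rintro _ ⟨a, A, hA, rfl⟩ _ ⟨a', A', hA', rfl⟩ h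
    rw [PsiConf_Mmat, PsiConf_Mmat] at h
    let i : Fin n := ⟨0, hn⟩
    have h1 : A i i = -A i i := by simpa using congrFun (congrFun hA i) i
    have h2 : A' i i = -A' i i := by simpa using congrFun (congrFun hA' i) i
    have h3 : A i i - a = A' i i - a' := by simpa using congrFun (congrFun h i) i
    obtain rfl : a = a' := by linarith
    obtain rfl : A = A' := sub_left_injective h
    rfl
  · rintro _ ⟨a, A, -, rfl⟩ _ ⟨a', A', -, rfl⟩
    rw [lie_Mmat_zero, PsiConf_Mmat, PsiConf_Mmat, PsiConf_Mmat]
    simp only [Ring.lie_def, sub_mul, mul_sub, smul_mul_assoc, mul_smul_comm, one_mul, mul_one]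
    module
  · ext N
    constructor
    · rintro ⟨_, ⟨a, A, hA, rfl⟩, rfl⟩
      refine ⟨-(2 * a), ?_⟩
      rw [PsiConf_Mmat, Matrix.transpose_sub, Matrix.transpose_smul, Matrix.transpose_one, hA]
      module
    · rintro ⟨c, hc⟩
      refine ⟨_, ⟨-(c / 2), N - (c / 2) • 1, ?_, rfl⟩, ?_⟩
      · rw [Matrix.transpose_sub, Matrix.transpose_smul, Matrix.transpose_one,
          eq_sub_of_add_eq' hc]
        module
      · rw [PsiConf_Mmat]
        module
  · rintro _ ⟨a, A, hA, rfl⟩ X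
    rw [PsiConf_Mmat]
    exact lie_Mmat_gMinus n a A hA X
end

section
/- Let n ≥ 1 and equip ℝ^n with its standard inner product. For 0 ≤ k ≤ n−1 define the linear map ∂_k : Alt^k(ℝ^n; ℝ) → Alt^{k+1}(ℝ^n; ℝ^n) by (∂_k ω)(ξ_0, …, ξ_k) := Σ_{i=0}^k (−1)^i ω(ξ_0, …, ξ̂_i, …, ξ_k) · ξ_i (scalar times vector), where ξ̂_i denotes omission. Then ∂_k is injective for every 0 ≤ k ≤ n−1, and ∂_{n−1} : Alt^{n−1}(ℝ^n; ℝ) → Alt^n(ℝ^n; ℝ^n) is a linear isomorphism. -/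
open Matrix

/-!
Injectivity of `∂_k` for `k < n` is read off on basis vectors: if `v : Fin k → Fin n` is injective,
some index `j` is missed by `v`, and the `j`-th coordinate of `(∂_k ω)(e_j, e_{v 0}, …, e_{v (k-1)})`
is `ω(e_{v 0}, …, e_{v (k-1)})`.

For `k + 1 = n`, an alternating `n`-form `ψ` on `ℝ^n` is determined by `w = ψ(e_0, …, e_{n-1})`.
The preimage of `ψ` is the contraction `ω = det(w, ·, …, ·)`: the claim `∂ω = ψ` is Cramer's rule
`∑ (-1)^i det(w, ξ_0, …, ξ̂_i, …, ξ_k) ξ_i = det(ξ) w`, and since both sides are alternating in `ξ`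
(`exists_alternatingMap_eq_delScalar`) it suffices to check it on the standard basis, where
`det(w, e_0, …, ê_i, …, e_k) = (-1)^i w_i`.
-/

/-- The map `∂_k : Alt^k(ℝ^n; ℝ) → Alt^{k+1}(ℝ^n; ℝ^n)`,
`(∂_k ω)(ξ_0, …, ξ_k) = ∑_i (−1)^i ω(ξ_0, …, ξ̂_i, …, ξ_k) · ξ_i`
(scalar times vector), written on cochains viewed as functions. -/
def delScalar (n k : ℕ) (ω : (Fin k → (Fin n → ℝ)) → ℝ) :
    (Fin (k + 1) → (Fin n → ℝ)) → (Fin n → ℝ) :=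
  fun ξ => ∑ i : Fin (k + 1), ((-1 : ℝ) ^ (i : ℕ) * ω (ξ ∘ i.succAbove)) • ξ i

/-- The coordinate of `∂_k ω` along a basis vector `e_j` not among the `e_{v i}` recovers `ω`. -/
lemma delScalar_cons_apply {n k : ℕ} (ω : (Fin k → (Fin n → ℝ)) → ℝ)
    (v : Fin k → Fin n) (j : Fin n) (hj : ∀ i, v i ≠ j) :
    delScalar n k ω (Fin.cons (Pi.single j 1) fun i => Pi.single (v i) 1) j =
      ω fun i => Pi.single (v i) 1 := by
  have h : ∀ i, (Pi.single (v i) (1 : ℝ) : Fin n → ℝ) j = 0 := fun i =>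
    Pi.single_eq_of_ne (hj i).symm 1
  simp only [delScalar, Finset.sum_apply, Pi.smul_apply, smul_eq_mul, Fin.sum_univ_succ,
    Fin.cons_zero, Fin.cons_succ, h, mul_zero, Finset.sum_const_zero, add_zero]
  simp [Function.comp_def]

lemma delScalar_injective {n k : ℕ} (hk : k + 1 ≤ n)
    {ω ω' : AlternatingMap ℝ (Fin n → ℝ) ℝ (Fin k)}
    (h : delScalar n k ⇑ω = delScalar n k ⇑ω') : ω = ω' := by
  refine Module.Basis.ext_alternating (Pi.basisFun ℝ (Fin n)) fun v _ => ?_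
  obtain ⟨j, hj⟩ : ∃ j, ∀ i, v i ≠ j := by
    by_contra! hc
    have := Fintype.card_le_of_surjective v hc
    simp only [Fintype.card_fin] at this
    omega
  simp only [Pi.basisFun_apply]
  rw [← delScalar_cons_apply ω v j hj, h, delScalar_cons_apply ω' v j hj]

/-- `∂_k ω` is an alternating map: it is the alternatization of
`(ξ_0, ξ_1, …, ξ_k) ↦ ω(ξ_1, …, ξ_k) · ξ_0`. -/
lemma exists_alternatingMap_eq_delScalar {n k : ℕ}
    (ω : AlternatingMap ℝ (Fin n → ℝ) ℝ (Fin k)) :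
    ∃ φ : AlternatingMap ℝ (Fin n → ℝ) (Fin n → ℝ) (Fin (k + 1)), ⇑φ = delScalar n k ⇑ω := by
  let f : (Fin n → ℝ) →ₗ[ℝ] AlternatingMap ℝ (Fin n → ℝ) (Fin n → ℝ) (Fin k) :=
    { toFun := fun x => (LinearMap.toSpanSingleton ℝ (Fin n → ℝ) x).compAlternatingMap ω
      map_add' := fun x y => by ext; simp [mul_add]
      map_smul' := fun c x => by ext; simp; ring }
  refine ⟨AlternatingMap.alternatizeUncurryFin f, ?_⟩
  funext ξ
  rw [AlternatingMap.alternatizeUncurryFin_apply]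
  refine Finset.sum_congr rfl fun i _ => ?_
  have : f (ξ i) (i.removeNth ξ) = ω (ξ ∘ i.succAbove) • ξ i := rfl
  rw [this, mul_smul]
  simp [← Int.cast_smul_eq_zsmul ℝ]

/-- A vector-valued alternating map with as many arguments as the dimension is determined by its
value on a basis; `AlternatingMap.eq_smul_basis_det` is the scalar-valued case. -/
lemma alternatingMap_ext_of_basis {ι M N : Type*} [Fintype ι] [DecidableEq ι]
    [AddCommGroup M] [Module ℝ M] [AddCommGroup N] [Module ℝ N] (b : Module.Basis ι ℝ M)
    {f g : AlternatingMap ℝ M N ι} (h : f b = g b) : f = g := by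
  refine b.ext_alternating fun v hv => ?_
  let σ : Equiv.Perm ι := Equiv.ofBijective v hv.bijective_of_finite
  have hf := f.map_perm b σ
  have hg := g.map_perm b σ
  rw [h] at hf
  exact hf.trans hg.symm

/-- In top degree `∂` is surjective: a preimage of `ψ` is `det(ψ(e_0, …, e_k), ·, …, ·)`. -/
lemma exists_delScalar_eq (k : ℕ)
    (ψ : AlternatingMap ℝ (Fin (k + 1) → ℝ) (Fin (k + 1) → ℝ) (Fin (k + 1))) :
    ∃ ω : AlternatingMap ℝ (Fin (k + 1) → ℝ) ℝ (Fin k), delScalar (k + 1) k ⇑ω = ⇑ψ := by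
  let b := Pi.basisFun ℝ (Fin (k + 1))
  let ω := b.det.curryLeft (ψ b)
  obtain ⟨φ, hφ⟩ := exists_alternatingMap_eq_delScalar ω
  refine ⟨ω, ?_⟩
  rw [← hφ]
  congr 1
  refine alternatingMap_ext_of_basis b ?_
  rw [hφ, delScalar]
  conv_rhs => rw [← b.sum_repr (ψ b)]
  refine Finset.sum_congr rfl fun i _ => ?_
  congr 1
  -- moving `ψ b` to slot `i` costs the sign `(-1)^i`
  have h1 : b.det (i.insertNth (ψ b) (i.removeNth b)) =
      (-1 : ℝ) ^ (i : ℕ) * ω (b ∘ i.succAbove) := by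
    rw [AlternatingMap.map_insertNth, ← Int.cast_smul_eq_zsmul ℝ]
    simp [ω]
    rfl
  rw [← h1, Fin.insertNth_removeNth, Module.Basis.det_apply, b.toMatrix_update,
    Module.Basis.toMatrix_self, ← cramer_apply, cramer_one]
  rfl

/-- `∂_k` is injective for every `0 ≤ k ≤ n−1`, and
`∂_{n−1} : Alt^{n−1}(ℝ^n; ℝ) → Alt^n(ℝ^n; ℝ^n)` is a linear isomorphism. -/
theorem stmt10 (n : ℕ) (hn : 1 ≤ n) :
    (∀ k : ℕ, k + 1 ≤ n →
      ∀ ω ω' : AlternatingMap ℝ (Fin n → ℝ) ℝ (Fin k),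
        delScalar n k ⇑ω = delScalar n k ⇑ω' → ω = ω') ∧
    (∀ k : ℕ, k + 1 = n →
      ∀ ψ : AlternatingMap ℝ (Fin n → ℝ) (Fin n → ℝ) (Fin (k + 1)),
        ∃! ω : AlternatingMap ℝ (Fin n → ℝ) ℝ (Fin k), delScalar n k ⇑ω = ⇑ψ) := by
  refine ⟨fun k hk ω ω' h => delScalar_injective hk h, ?_⟩
  rintro k rfl ψ
  obtain ⟨ω, hω⟩ := exists_delScalar_eq k ψ
  exact ⟨ω, hω, fun ω' hω' => delScalar_injective le_rfl (hω'.trans hω.symm)⟩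
end

section
/- Let n ≥ 1 and equip ℝ^n with its standard inner product ⟨·,·⟩. For ℓ ≥ 0 define the linear map ∂'_ℓ : Alt^ℓ(ℝ^n; ℝ^n) → Alt^{ℓ+1}(ℝ^n; ℝ) by (∂'_ℓ ψ)(ξ_0, …, ξ_ℓ) := Σ_{i=0}^ℓ (−1)^i ⟨ξ_i, ψ(ξ_0, …, ξ̂_i, …, ξ_ℓ)⟩, and for 0 ≤ k ≤ n−1 let ∂_k : Alt^k(ℝ^n; ℝ) → Alt^{k+1}(ℝ^n; ℝ^n) be given by (∂_k ω)(ξ_0, …, ξ_k) := Σ_{i=0}^k (−1)^i ω(ξ_0, …, ξ̂_i, …, ξ_k) · ξ_i. Then: (i) ∂'_{k+1} ∘ ∂_k = 0 for every 0 ≤ k ≤ n−1; and (ii) ∂'_ℓ is surjective for every 0 ≤ ℓ ≤ n−1. -/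
/-!
Both parts are instances of the alternatised uncurrying `AlternatingMap.alternatizeUncurryFin`.

(i) The form `∂'_{k+1} (∂_k ω)` is the twofold uncurrying of the bilinear map
`(x, y) ↦ ⟨x, y⟩ • ω`. The inner product is symmetric while interchanging the two removed
arguments changes the sign, so the double sum cancels.

(ii) Given `α`, let `ψ η` be the vector with `j`-th coordinate `(ℓ + 1)⁻¹ α(e_j, η)`, so that
`⟨x, ψ η⟩ = (ℓ + 1)⁻¹ α(x, η)`. Moving `ξ_i` back to its place costs the sign `(-1)^i`, so each of
the `ℓ + 1` terms of `(∂'_ℓ ψ)(ξ)` equals `(ℓ + 1)⁻¹ α(ξ)`.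
-/

open Matrix

/-- The map `∂'_ℓ : Alt^ℓ(ℝ^n; ℝ^n) → Alt^{ℓ+1}(ℝ^n; ℝ)`,
`(∂'_ℓ ψ)(ξ_0, …, ξ_ℓ) = ∑_i (−1)^i ⟨ξ_i, ψ(ξ_0, …, ξ̂_i, …, ξ_ℓ)⟩` for the standard
inner product `⟨·,·⟩` on `ℝ^n`, written on cochains viewed as functions. -/
def delVector (n ℓ : ℕ) (ψ : (Fin ℓ → (Fin n → ℝ)) → (Fin n → ℝ)) :
    (Fin (ℓ + 1) → (Fin n → ℝ)) → ℝ :=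
  fun ξ => ∑ i : Fin (ℓ + 1), (-1 : ℝ) ^ (i : ℕ) * (ξ i ⬝ᵥ ψ (ξ ∘ i.succAbove))

/-- `(x, y) ↦ ⟨x, y⟩ • ω`, a symmetric bilinear map with values in alternating forms. -/
noncomputable def dotSmul {n k : ℕ} (ω : AlternatingMap ℝ (Fin n → ℝ) ℝ (Fin k)) :
    (Fin n → ℝ) →ₗ[ℝ] (Fin n → ℝ) →ₗ[ℝ] AlternatingMap ℝ (Fin n → ℝ) ℝ (Fin k) :=
  LinearMap.mk₂ ℝ (fun x y => (x ⬝ᵥ y) • ω)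
    (fun x y z => by rw [add_dotProduct, add_smul])
    (fun c x y => by rw [smul_dotProduct, smul_assoc])
    (fun x y z => by rw [dotProduct_add, add_smul])
    (fun c x y => by rw [dotProduct_smul, smul_assoc])

theorem delVector_delScalar {n k : ℕ} (ω : AlternatingMap ℝ (Fin n → ℝ) ℝ (Fin k)) :
    delVector n (k + 1) (delScalar n k ⇑ω) = 0 := by
  have h := AlternatingMap.alternatizeUncurryFin_alternatizeUncurryFinLM_comp_of_symmetric
    (f := dotSmul ω) (fun x y => by simp [dotSmul, dotProduct_comm])
  ext ξ
  have hξ := congrArg (fun g => g ξ) h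
  simp only [AlternatingMap.alternatizeUncurryFin_apply, LinearMap.comp_apply,
    AlternatingMap.alternatizeUncurryFinLM_apply, AlternatingMap.zero_apply] at hξ
  rw [Pi.zero_apply, ← hξ]
  simp only [delVector, delScalar, dotProduct_sum, dotProduct_smul, dotSmul, LinearMap.mk₂_apply,
    AlternatingMap.smul_apply, smul_eq_mul, zsmul_eq_mul, Int.cast_pow, Int.cast_neg, Int.cast_one]
  refine Finset.sum_congr rfl fun i _ => congrArg _ (Finset.sum_congr rfl fun j _ => ?_)
  change _ * ω (j.removeNth (i.removeNth ξ)) * (ξ i ⬝ᵥ i.removeNth ξ j) = _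
  ring

/-- The vector-valued form `ψ` with `⟨x, ψ η⟩ = (ℓ + 1)⁻¹ α(x, η)`. -/
noncomputable def preimageForm {n ℓ : ℕ} (α : AlternatingMap ℝ (Fin n → ℝ) ℝ (Fin (ℓ + 1))) :
    AlternatingMap ℝ (Fin n → ℝ) (Fin n → ℝ) (Fin ℓ) :=
  AlternatingMap.pi fun j => ((ℓ : ℝ) + 1)⁻¹ • α.curryLeft (Pi.single j 1)

theorem dotProduct_preimageForm {n ℓ : ℕ} (α : AlternatingMap ℝ (Fin n → ℝ) ℝ (Fin (ℓ + 1)))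
    (x : Fin n → ℝ) (η : Fin ℓ → Fin n → ℝ) :
    x ⬝ᵥ preimageForm α η = ((ℓ : ℝ) + 1)⁻¹ * α.curryLeft x η := by
  -- `α.curryLeft · η` as a linear functional, determined by its values on the standard basis
  let L : (Fin n → ℝ) →ₗ[ℝ] ℝ :=
    { toFun := fun y => α.curryLeft y η
      map_add' := fun y z => by simp only [map_add, AlternatingMap.add_apply]
      map_smul' := fun c y => by simp only [map_smul, AlternatingMap.smul_apply, RingHom.id_apply] }
  change _ = _ * L x
  rw [LinearMap.pi_apply_eq_sum_univ L x, Finset.mul_sum, dotProduct]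
  refine Finset.sum_congr rfl fun j _ => ?_
  have hj : (fun i => if j = i then (1 : ℝ) else 0) = Pi.single j 1 := by
    ext i; simp [Pi.single_apply, eq_comm]
  rw [hj]
  change x j * (((ℓ : ℝ) + 1)⁻¹ * L (Pi.single j 1)) = _
  rw [smul_eq_mul]
  ring

theorem delVector_preimageForm {n ℓ : ℕ} (α : AlternatingMap ℝ (Fin n → ℝ) ℝ (Fin (ℓ + 1))) :
    delVector n ℓ ⇑(preimageForm α) = ⇑α := by
  ext ξ
  have h := congrArg (fun g => g ξ) (AlternatingMap.alternatizeUncurryFin_curryLeft α)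
  simp only [AlternatingMap.alternatizeUncurryFin_apply, zsmul_eq_mul, Int.cast_pow, Int.cast_neg,
    Int.cast_one, AlternatingMap.smul_apply, nsmul_eq_mul, Nat.cast_add, Nat.cast_one] at h
  have hℓ : (ℓ : ℝ) + 1 ≠ 0 := by positivity
  rw [← mul_right_inj' hℓ, ← h, delVector, Finset.mul_sum]
  refine Finset.sum_congr rfl fun i _ => ?_
  change _ = _ * α.curryLeft (ξ i) (ξ ∘ i.succAbove)
  rw [dotProduct_preimageForm]
  field_simp

/-- (i) `∂'_{k+1} ∘ ∂_k = 0` for every `0 ≤ k ≤ n−1`; and (ii) `∂'_ℓ` is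
surjective for every `0 ≤ ℓ ≤ n−1`. -/
theorem stmt11 (n : ℕ) (hn : 1 ≤ n) :
    (∀ k : ℕ, k + 1 ≤ n →
      ∀ ω : AlternatingMap ℝ (Fin n → ℝ) ℝ (Fin k),
        delVector n (k + 1) (delScalar n k ⇑ω) = 0) ∧
    (∀ ℓ : ℕ, ℓ + 1 ≤ n →
      ∀ α : AlternatingMap ℝ (Fin n → ℝ) ℝ (Fin (ℓ + 1)),
        ∃ ψ : AlternatingMap ℝ (Fin n → ℝ) (Fin n → ℝ) (Fin ℓ),
          delVector n ℓ ⇑ψ = ⇑α) := by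
  exact ⟨fun _ _ ω => delVector_delScalar ω,
    fun _ _ α => ⟨preimageForm α, delVector_preimageForm α⟩⟩
end

section
/- Let V be a real vector space and let d, ∂, T : V → V be linear maps satisfying T∘T = 0 and T∘∂∘T = T, and suppose the operator N := T∘(d − ∂) is nilpotent (N^m = 0 for some m). Then for every α ∈ V with T(α) = 0 there exists a unique β ∈ V such that: T(β) = 0, β − α ∈ im T, and T(d(β)) = 0. Moreover, β = α − G(d(α)) where G := (Σ_{i=0}^{m−1} (−1)^i N^i) ∘ T. -/
/-!
Put `N = T ∘ (d - ∂)`. On `im T` the relation `T ∘ ∂ ∘ T = T` gives `T ∘ d = 1 + N`, and since `N`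
is nilpotent, `1 + N` is invertible on `V` with inverse the alternating geometric sum
`S = ∑ (-1)^i N^i`. For `β = α + y` with `y ∈ im T`, the equation `T (d β) = 0` therefore reads
`(1 + N) y = -T (d α)`, whose only solution is `y = -S (T (d α)) = -G (d α)`. This `y` does lie in
`im T`, because `S = 1 - N ∘ S` and `im N ⊆ im T`; then `T y = 0` follows from `T ∘ T = 0`.
-/


/-- the splitting-operator lemma: let `d, ∂, T : V → V` be linear with
`T∘T = 0`, `T∘∂∘T = T` and `N := T∘(d − ∂)` nilpotent, say `N^m = 0`. Then for every
`α` with `T(α) = 0` there is a unique `β` with `T(β) = 0`, `β − α ∈ im T` and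
`T(d(β)) = 0`; moreover `β = α − G(d(α))` where `G = (∑_{i<m} (−1)^i N^i) ∘ T`. -/
theorem stmt16 {V : Type*} [AddCommGroup V] [Module ℝ V]
    (d del T : V →ₗ[ℝ] V)
    (hTT : T ∘ₗ T = 0) (hTdelT : T ∘ₗ del ∘ₗ T = T)
    (m : ℕ) (hnil : ((T ∘ₗ (d - del) : Module.End ℝ V)) ^ m = 0)
    (G : V →ₗ[ℝ] V)
    (hG : G = (∑ i ∈ Finset.range m,
      ((-1 : ℝ) ^ i) • (((T ∘ₗ (d - del) : Module.End ℝ V)) ^ i)) ∘ₗ T)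
    (α : V) (hα : T α = 0) :
    (T (α - G (d α)) = 0 ∧
      (α - G (d α)) - α ∈ LinearMap.range T ∧
      T (d (α - G (d α))) = 0) ∧
    (∀ β : V, T β = 0 → β - α ∈ LinearMap.range T → T (d β) = 0 →
      β = α - G (d α)) := by
  set N : Module.End ℝ V := T ∘ₗ (d - del) with hN
  set S : Module.End ℝ V := ∑ i ∈ Finset.range m, ((-1 : ℝ) ^ i) • N ^ i with hS
  have hS' : S = ∑ i ∈ Finset.range m, (-N) ^ i := by
    refine Finset.sum_congr rfl fun i _ => ?_
    rw [← smul_pow, neg_one_smul]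
  have hneg : (-N) ^ m = 0 := by rw [neg_pow, hnil, mul_zero]
  have hright : (1 + N) * S = 1 := by
    have h := mul_neg_geom_sum (-N) m
    rwa [hneg, sub_neg_eq_add, sub_zero, ← hS'] at h
  have hleft : S * (1 + N) = 1 := by
    have h := geom_sum_mul_neg (-N) m
    rwa [hneg, sub_neg_eq_add, sub_zero, ← hS'] at h
  have hright_apply (v : V) : S v + N (S v) = v := by
    simpa using LinearMap.congr_fun hright v
  have hleft_apply (v : V) : S (v + N v) = v := by
    simpa using LinearMap.congr_fun hleft v
  have hTT_apply (v : V) : T (T v) = 0 := LinearMap.congr_fun hTT v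
  have hTd (w : V) : T (d (T w)) = T w + N (T w) := by
    have h : T (del (T w)) = T w := LinearMap.congr_fun hTdelT w
    simp [hN, h]
  have hG_apply (v : V) : G v = S (T v) := by rw [hG]; rfl
  have hrange (v : V) : ∃ w, T w = G v := by
    refine ⟨v - (d - del) (S (T v)), ?_⟩
    rw [map_sub, hG_apply]
    exact sub_eq_of_eq_add (hright_apply (T v)).symm
  refine ⟨?_, ?_⟩
  · obtain ⟨w, hw⟩ := hrange (d α)
    refine ⟨?_, ⟨-w, ?_⟩, ?_⟩
    · rw [map_sub, hα, ← hw, hTT_apply, sub_zero]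
    · rw [map_neg, hw]; abel
    · rw [map_sub, map_sub, ← hw, hTd, hw, hG_apply, hright_apply, sub_self]
  · rintro β - ⟨w, hw⟩ hβ
    have h : T (d α) = -(T w + N (T w)) := by
      rw [← hTd, hw, map_sub, map_sub, hβ]; abel
    rw [hG_apply, h, map_neg, hleft_apply, hw]; abel
end

section
/- In the BGG setup, suppose additionally that d_{k+1}∘d_k = 0 for all k (the twisted sequence is a complex). For each k let S_k : Υ_k → C^k be the map assigning to α ∈ Υ_k the unique element S_k(α) with T_k(S_k(α)) = 0, S_k(α) − α ∈ im T_{k+1}, and T_{k+1}(d_k(S_k(α))) = 0, and define D_k : Υ_k → C^{k+1} by D_k(α) := Π_{k+1}(d_k(S_k(α))). Then for every α ∈ Υ_k: (i) D_k(α) ∈ Υ_{k+1}; (ii) d_k(S_k(α)) = S_{k+1}(D_k(α)) (S is a chain map); and (iii) D_{k+1}(D_k(α)) = 0 (the BGG sequence is a complex). -/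
/-!
Since `T (d s) = 0`, the projection `Π` changes `d s` only by `T (∂ (d s))`. Hence `Dα` lies in `Υ`,
and `d s` differs from it by an element of `im T`; as `d (d s) = 0`, the element `d s` satisfies
all three conditions characterizing the splitting element of `Dα`. Splitting elements are
unique by nilpotency of `T ∘ (d - ∂)` (`eq_zero_of_mem_range_of_T_d_eq_zero`), so `d s` is the
splitting element of `Dα`, and (iii) follows from `d ∘ d = 0`.
-/

/-- The uniqueness part of the splitting lemma: an element `v` of `im T` satisfies `T (∂ v) = v`, so
if also `T (d v) = 0`, then `v` is an eigenvector of the nilpotent operator `T ∘ (d - ∂)` with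
eigenvalue `-1`, unless it vanishes. -/
theorem eq_zero_of_mem_range_of_T_d_eq_zero {V W : Type*} [AddCommGroup V] [Module ℝ V]
    [AddCommGroup W] [Module ℝ W] (d del : V →ₗ[ℝ] W) (T : W →ₗ[ℝ] V)
    (hTdelT : T ∘ₗ del ∘ₗ T = T)
    (hnil : ∃ m, ((T ∘ₗ (d - del) : Module.End ℝ V)) ^ m = 0)
    (v : V) (hv : v ∈ LinearMap.range T) (hd : T (d v) = 0) : v = 0 := by
  obtain ⟨w, rfl⟩ := hv
  have h1 : T (del (T w)) = T w := LinearMap.congr_fun hTdelT w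
  have h2 : (T ∘ₗ (d - del) : Module.End ℝ V) (T w) = -T w := by
    simp [hd, h1]
  obtain ⟨m, hm⟩ := hnil
  have h3 : ∀ n : ℕ, ((T ∘ₗ (d - del) : Module.End ℝ V) ^ n) (T w) = (-1 : ℝ) ^ n • T w := by
    intro n
    induction n with
    | zero => simp
    | succ n ih => rw [pow_succ, Module.End.mul_apply, h2, map_neg, ih, pow_succ]; simp
  have h4 := h3 m
  rw [hm, LinearMap.zero_apply] at h4
  exact (smul_eq_zero.mp h4.symm).resolve_left (pow_ne_zero _ (by norm_num))

/-- in the BGG setup, if the twisted sequence is a complex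
(`d∘d = 0`), then for `α ∈ Υ_k` with splitting element `s = S_k(α)` (characterized by
`T(s) = 0`, `s − α ∈ im T`, `T(d(s)) = 0`) and BGG operator value
`Dα = Π(d(s))`: (i) `Dα ∈ Υ_{k+1}`; (ii) `d(s) = S_{k+1}(Dα)`, i.e. `S` is a chain
map; and (iii) `D_{k+1}(D_k α) = 0`, i.e. the BGG sequence is a complex.

Here the cochain spaces are indexed so that `T j : C (j+1) → C j` plays the role of
`T_{j+1}`, and `Υ` at level `C (j+1)` is `ker ∂_{j+1} ∩ ker T_{j+1}`. -/
theorem stmt17 (C : ℕ → Type*) [∀ k, AddCommGroup (C k)] [∀ k, Module ℝ (C k)]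
    (d del : ∀ k, C k →ₗ[ℝ] C (k + 1)) (T : ∀ k, C (k + 1) →ₗ[ℝ] C k)
    -- the twisted sequence is a complex
    (hdd : ∀ k, (d (k + 1)) ∘ₗ (d k) = 0)
    -- the BGG setup
    (hdeldel : ∀ k, (del (k + 1)) ∘ₗ (del k) = 0)
    (hTT : ∀ k, (T k) ∘ₗ (T (k + 1)) = 0)
    (hTdelT : ∀ k, (T k) ∘ₗ (del k) ∘ₗ (T k) = T k)
    (hdelTdel : ∀ k, (del k) ∘ₗ (T k) ∘ₗ (del k) = del k)
    (hnil : ∀ k, ∃ m, ((T k ∘ₗ (d k - del k) : Module.End ℝ (C k))) ^ m = 0)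
    -- α ∈ Υ_k
    (k : ℕ) (α : C (k + 1)) (hα₁ : del (k + 1) α = 0) (hα₂ : T k α = 0)
    -- s = S_k(α), the splitting element of α
    (s : C (k + 1)) (hs₁ : T k s = 0) (hs₂ : s - α ∈ LinearMap.range (T (k + 1)))
    (hs₃ : T (k + 1) (d (k + 1) s) = 0)
    -- Dα = D_k(α) = Π_{k+1}(d(S_k(α))), the value of the BGG operator
    (Dα : C (k + 2))
    (hDα : Dα = d (k + 1) s - del (k + 1) (T (k + 1) (d (k + 1) s)) -
      T (k + 2) (del (k + 2) (d (k + 1) s))) :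
    -- (i) D_k(α) ∈ Υ_{k+1}
    (del (k + 2) Dα = 0 ∧ T (k + 1) Dα = 0) ∧
    -- (ii) d(S_k(α)) = S_{k+1}(D_k(α)): d(s) satisfies the characterization of the
    -- splitting element of Dα, so any element satisfying it equals d(s)
    (T (k + 1) (d (k + 1) s) = 0 ∧
      d (k + 1) s - Dα ∈ LinearMap.range (T (k + 2)) ∧
      T (k + 2) (d (k + 2) (d (k + 1) s)) = 0 ∧
      (∀ t : C (k + 2),
        T (k + 1) t = 0 → t - Dα ∈ LinearMap.range (T (k + 2)) →
        T (k + 2) (d (k + 2) t) = 0 → t = d (k + 1) s)) ∧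
    -- (iii) D_{k+1}(D_k(α)) = 0: for any splitting element t = S_{k+1}(Dα),
    -- the projection Π of d(t) vanishes
    (∀ t : C (k + 2),
      T (k + 1) t = 0 → t - Dα ∈ LinearMap.range (T (k + 2)) →
      T (k + 2) (d (k + 2) t) = 0 →
      d (k + 2) t - del (k + 2) (T (k + 2) (d (k + 2) t)) -
        T (k + 3) (del (k + 3) (d (k + 2) t)) = 0) := by
  have hdds : d (k + 2) (d (k + 1) s) = 0 := LinearMap.congr_fun (hdd (k + 1)) s
  have hD : Dα = d (k + 1) s - T (k + 2) (del (k + 2) (d (k + 1) s)) := by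
    rw [hDα, hs₃, map_zero, sub_zero]
  have hsub : d (k + 1) s - Dα = T (k + 2) (del (k + 2) (d (k + 1) s)) := by
    rw [hD, sub_sub_cancel]
  have huniq : ∀ t : C (k + 2),
      T (k + 1) t = 0 → t - Dα ∈ LinearMap.range (T (k + 2)) →
      T (k + 2) (d (k + 2) t) = 0 → t = d (k + 1) s := by
    intro t _ ht₂ ht₃
    refine sub_eq_zero.mp (eq_zero_of_mem_range_of_T_d_eq_zero (d (k + 2)) (del (k + 2))
      (T (k + 2)) (hTdelT (k + 2)) (hnil (k + 2)) _ ?_ ?_)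
    · have h := Submodule.sub_mem _ ht₂ (show d (k + 1) s - Dα ∈ LinearMap.range (T (k + 2)) from
        ⟨_, hsub.symm⟩)
      rwa [sub_sub_sub_cancel_right] at h
    · rw [map_sub, map_sub, ht₃, hdds, map_zero, sub_zero]
  refine ⟨⟨?_, ?_⟩, ⟨hs₃, ⟨_, hsub.symm⟩, by rw [hdds, map_zero], huniq⟩, ?_⟩
  · have h : del (k + 2) (T (k + 2) (del (k + 2) (d (k + 1) s))) = del (k + 2) (d (k + 1) s) :=
      LinearMap.congr_fun (hdelTdel (k + 2)) _
    rw [hD, map_sub, h, sub_self]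
  · have h : T (k + 1) (T (k + 2) (del (k + 2) (d (k + 1) s))) = 0 :=
      LinearMap.congr_fun (hTT (k + 1)) _
    rw [hD, map_sub, h, hs₃, sub_zero]
  · intro t ht₁ ht₂ ht₃
    rw [huniq t ht₁ ht₂ ht₃, hdds]
    simp
end

section
/- In the BGG setup with d_{k+1}∘d_k = 0 for all k, let S_k and D_k be as in the BGG complex theorem (so D_{k+1}∘D_k = 0 and d_k∘S_k = S_{k+1}∘D_k). Then for every k, the linear map induced by S_k from the BGG cohomology ker D_k / im D_{k−1} to the cohomology ker d_k / im d_{k−1} of the complex (C^*, d) is well defined and bijective; i.e., the BGG complex and the twisted complex compute the same cohomology. -/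
/-!
Since `T ∘ del` is the identity on `im T`, the operator `T ∘ d` agrees there with `id + T ∘ (d - del)`,
which is invertible because `T ∘ (d - del)` is nilpotent. Hence `T ∘ d` restricts to a bijection of
`im T` onto itself.

Injectivity (`eq_of_sub_mem_range`) characterizes `S α` as the only `φ ∈ α + im T` with `T (d φ) = 0`.
When `T φ = 0`, the element `φ - T (del φ)` is the projection of `φ` to `Υ`; so `φ = S (φ - T (del φ))`
whenever also `T (d φ) = 0`. For `φ = d (S α)` this is the identity `d (S α) = S (D α)`, which makes
the induced map well defined.

Surjectivity (`exists_add_map_mem_ker`) allows any cochain to be changed by an exact one so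
that it lies in `ker T`. Applied to a cocycle `φ` it gives a cohomologous cocycle in the image of `S`,
so the induced map is surjective. Applied to a primitive `ψ` of `S α - S α'`, it gives another
primitive that has the form `S β`; projecting `d (S β) = S α - S α'` to `Υ` gives `D β = α - α'`,
so the induced map is injective.
-/

section Homotopy

variable {V W : Type*} [AddCommGroup V] [AddCommGroup W] [Module ℝ V] [Module ℝ W]
  {d del : V →ₗ[ℝ] W} {T : W →ₗ[ℝ] V}

theorem homotopy_del_of_mem_range (hT : T ∘ₗ del ∘ₗ T = T) {u : V} (hu : u ∈ LinearMap.range T) :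
    T (del u) = u := by
  obtain ⟨w, rfl⟩ := hu
  exact LinearMap.congr_fun hT w

theorem isUnit_one_add_homotopy (hnil : ∃ m, (T ∘ₗ (d - del) : Module.End ℝ V) ^ m = 0) :
    IsUnit (1 + (T ∘ₗ (d - del) : Module.End ℝ V)) :=
  IsNilpotent.isUnit_one_add hnil

/-- `T ∘ d` is injective on `im T`, stated for two elements of the same coset of `im T`. -/
theorem eq_of_sub_mem_range (hT : T ∘ₗ del ∘ₗ T = T)
    (hnil : ∃ m, (T ∘ₗ (d - del) : Module.End ℝ V) ^ m = 0) {u v : V}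
    (huv : u - v ∈ LinearMap.range T) (hd : T (d u) = T (d v)) : u = v := by
  have hinj := ((Module.End.isUnit_iff _).1 (isUnit_one_add_homotopy hnil)).injective
  rw [← sub_eq_zero]
  apply hinj
  have h := homotopy_del_of_mem_range hT huv
  simp only [map_sub] at h
  simp [hd, h]

/-- `T ∘ d` maps `V` onto `im T`; hence every `φ` can be moved into `ker T` by adding an element of
`im d`. -/
theorem exists_add_map_mem_ker (hT : T ∘ₗ del ∘ₗ T = T)
    (hnil : ∃ m, (T ∘ₗ (d - del) : Module.End ℝ V) ^ m = 0) (φ : W) :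
    ∃ ψ : V, T (φ + d ψ) = 0 := by
  obtain ⟨u, hu⟩ :=
    ((Module.End.isUnit_iff _).1 (isUnit_one_add_homotopy hnil)).surjective (-T φ)
  have hu' : u + (T (d u) - T (del u)) = -T φ := by simpa using hu
  -- The equation for `u` itself shows `u ∈ im T`.
  have hmem : u ∈ LinearMap.range T := by
    refine ⟨-φ - d u + del u, ?_⟩
    simp only [map_add, map_sub, map_neg]
    rw [← hu']
    abel
  rw [homotopy_del_of_mem_range hT hmem] at hu'
  refine ⟨u, ?_⟩
  rw [map_add, ← neg_eq_iff_add_eq_zero, ← hu']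
  abel

end Homotopy


/-- in the BGG setup with `d∘d = 0`, with the splitting operators `S` and
BGG operators `D`, the map induced by `S` from the BGG cohomology `ker D / im D` to the
cohomology `ker d / im d` of the twisted complex is well defined and bijective: it maps
BGG cocycles to twisted cocycles, respects and reflects coboundaries, and hits every
twisted cohomology class.

Here the cochain spaces are indexed so that `T j : C (j+1) → C j` plays the role of
`T_{j+1}`, `Υ` at level `C (j+1)` is `ker ∂_{j+1} ∩ ker T_{j+1}`, and the cohomology is
computed at the level `C (k+2)`. -/
theorem stmt18 (C : ℕ → Type*) [∀ k, AddCommGroup (C k)] [∀ k, Module ℝ (C k)]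
    (d del : ∀ k, C k →ₗ[ℝ] C (k + 1)) (T : ∀ k, C (k + 1) →ₗ[ℝ] C k)
    -- the twisted sequence is a complex
    (hdd : ∀ k, (d (k + 1)) ∘ₗ (d k) = 0)
    -- the BGG setup
    (hdeldel : ∀ k, (del (k + 1)) ∘ₗ (del k) = 0)
    (hTT : ∀ k, (T k) ∘ₗ (T (k + 1)) = 0)
    (hTdelT : ∀ k, (T k) ∘ₗ (del k) ∘ₗ (T k) = T k)
    (hdelTdel : ∀ k, (del k) ∘ₗ (T k) ∘ₗ (del k) = del k)
    (hnil : ∀ k, ∃ m, ((T k ∘ₗ (d k - del k) : Module.End ℝ (C k))) ^ m = 0)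
    -- the splitting operators S_j : Υ_j → C^j …
    (S : ∀ j, C (j + 1) → C (j + 1))
    (hS : ∀ j, ∀ α : C (j + 1), del (j + 1) α = 0 → T j α = 0 →
      T j (S j α) = 0 ∧ S j α - α ∈ LinearMap.range (T (j + 1)) ∧
        T (j + 1) (d (j + 1) (S j α)) = 0)
    -- … and the BGG operators D_j(α) := Π(d(S_j(α)))
    (D : ∀ j, C (j + 1) → C (j + 2))
    (hD : ∀ j, ∀ α : C (j + 1), del (j + 1) α = 0 → T j α = 0 →
      D j α = d (j + 1) (S j α) - del (j + 1) (T (j + 1) (d (j + 1) (S j α))) -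
        T (j + 2) (del (j + 2) (d (j + 1) (S j α))))
    (k : ℕ) :
    -- S maps BGG cocycles to cocycles of the twisted complex
    (∀ α : C (k + 2), del (k + 2) α = 0 → T (k + 1) α = 0 → D (k + 1) α = 0 →
      d (k + 2) (S (k + 1) α) = 0) ∧
    -- the induced map on cohomology is well defined
    (∀ α α' : C (k + 2),
      del (k + 2) α = 0 → T (k + 1) α = 0 → del (k + 2) α' = 0 → T (k + 1) α' = 0 →
      D (k + 1) α = 0 → D (k + 1) α' = 0 →
      (∃ β : C (k + 1), del (k + 1) β = 0 ∧ T k β = 0 ∧ α - α' = D k β) →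
      ∃ ψ : C (k + 1), S (k + 1) α - S (k + 1) α' = d (k + 1) ψ) ∧
    -- the induced map on cohomology is injective
    (∀ α α' : C (k + 2),
      del (k + 2) α = 0 → T (k + 1) α = 0 → del (k + 2) α' = 0 → T (k + 1) α' = 0 →
      D (k + 1) α = 0 → D (k + 1) α' = 0 →
      (∃ ψ : C (k + 1), S (k + 1) α - S (k + 1) α' = d (k + 1) ψ) →
      ∃ β : C (k + 1), del (k + 1) β = 0 ∧ T k β = 0 ∧ α - α' = D k β) ∧
    -- the induced map on cohomology is surjective
    (∀ φ : C (k + 2), d (k + 2) φ = 0 →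
      ∃ α : C (k + 2), del (k + 2) α = 0 ∧ T (k + 1) α = 0 ∧ D (k + 1) α = 0 ∧
        ∃ ψ : C (k + 1), S (k + 1) α - φ = d (k + 1) ψ) := by
  have dd : ∀ j x, d (j + 1) (d j x) = 0 := fun j x => LinearMap.congr_fun (hdd j) x
  have deldel : ∀ j x, del (j + 1) (del j x) = 0 := fun j x => LinearMap.congr_fun (hdeldel j) x
  have TT : ∀ j x, T j (T (j + 1) x) = 0 := fun j x => LinearMap.congr_fun (hTT j) x
  have delTdel : ∀ j x, del j (T j (del j x)) = del j x :=
    fun j x => LinearMap.congr_fun (hdelTdel j) x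
  have S_unique : ∀ j (α φ : C (j + 1)), del (j + 1) α = 0 → T j α = 0 →
      φ - α ∈ LinearMap.range (T (j + 1)) → T (j + 1) (d (j + 1) φ) = 0 → S j α = φ := by
    intro j α φ h1 h2 h3 h4
    obtain ⟨-, h5, h6⟩ := hS j α h1 h2
    refine eq_of_sub_mem_range (hTdelT (j + 1)) (hnil (j + 1)) ?_ (h6.trans h4.symm)
    have := sub_mem h5 h3
    rwa [sub_sub_sub_cancel_right] at this
  -- On `ker T ∩ ker (T ∘ d)`, the projection to `Υ` is a right inverse of `S`.
  have S_proj : ∀ j (φ : C (j + 1)), T j φ = 0 → T (j + 1) (d (j + 1) φ) = 0 →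
      del (j + 1) (φ - T (j + 1) (del (j + 1) φ)) = 0 ∧
      T j (φ - T (j + 1) (del (j + 1) φ)) = 0 ∧
      S j (φ - T (j + 1) (del (j + 1) φ)) = φ := by
    intro j φ h1 h2
    have h3 : del (j + 1) (φ - T (j + 1) (del (j + 1) φ)) = 0 := by
      rw [map_sub, delTdel, sub_self]
    have h4 : T j (φ - T (j + 1) (del (j + 1) φ)) = 0 := by rw [map_sub, TT, h1, sub_zero]
    exact ⟨h3, h4, S_unique j _ _ h3 h4 ⟨del (j + 1) φ, by abel⟩ h2⟩
  have D_eq : ∀ j (α : C (j + 1)), del (j + 1) α = 0 → T j α = 0 →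
      D j α = d (j + 1) (S j α) - T (j + 2) (del (j + 2) (d (j + 1) (S j α))) := by
    intro j α h1 h2
    rw [hD j α h1 h2, (hS j α h1 h2).2.2, map_zero, sub_zero]
  have proj_S : ∀ j (α : C (j + 1)), del (j + 1) α = 0 → T j α = 0 →
      S j α - T (j + 1) (del (j + 1) (S j α)) = α := by
    intro j α h1 h2
    have h := homotopy_del_of_mem_range (hTdelT (j + 1)) (hS j α h1 h2).2.1
    rw [map_sub, h1, sub_zero] at h
    rw [h, sub_sub_cancel]
  refine ⟨?_, ?_, ?_, ?_⟩
  · intro α h1 h2 h3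
    -- `d (S α)` and `0` lie in the same coset of `im T`, as the projection of `d (S α)` is `D α = 0`.
    refine eq_of_sub_mem_range (hTdelT (k + 3)) (hnil (k + 3)) ?_ ?_
    · rw [D_eq (k + 1) α h1 h2, sub_eq_zero] at h3
      rw [sub_zero]
      exact ⟨_, h3.symm⟩
    · rw [dd, map_zero, map_zero, map_zero]
  · rintro α α' h1 h2 h1' h2' - - ⟨β, hb1, hb2, hb⟩
    refine ⟨S k β, ?_⟩
    obtain ⟨-, m, t⟩ := hS (k + 1) α h1 h2
    obtain ⟨-, m', t'⟩ := hS (k + 1) α' h1' h2'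
    refine eq_of_sub_mem_range (hTdelT (k + 2)) (hnil (k + 2)) ?_ ?_
    · rw [D_eq k β hb1 hb2] at hb
      have m'' : T (k + 2) (del (k + 2) (d (k + 1) (S k β))) ∈ LinearMap.range (T (k + 2)) :=
        ⟨_, rfl⟩
      have h := sub_mem (sub_mem m m') m''
      have e : S (k + 1) α - α - (S (k + 1) α' - α') -
          T (k + 2) (del (k + 2) (d (k + 1) (S k β))) =
          S (k + 1) α - S (k + 1) α' - (α - α') -
            T (k + 2) (del (k + 2) (d (k + 1) (S k β))) := by abel
      rw [e, hb, sub_sub, sub_add_cancel] at h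
      exact h
    · rw [dd, map_zero, map_sub, map_sub, t, t', sub_zero]
  · rintro α α' h1 h2 h1' h2' - - ⟨ψ, hψ⟩
    obtain ⟨χ, hχ⟩ := exists_add_map_mem_ker (hTdelT k) (hnil k) ψ
    have hdψ : d (k + 1) (ψ + d k χ) = S (k + 1) α - S (k + 1) α' := by
      rw [map_add, dd, add_zero, hψ]
    have ht : T (k + 1) (d (k + 1) (ψ + d k χ)) = 0 := by
      rw [hdψ, map_sub, (hS (k + 1) α h1 h2).1, (hS (k + 1) α' h1' h2').1, sub_zero]
    obtain ⟨b1, b2, b3⟩ := S_proj k _ hχ ht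
    refine ⟨_, b1, b2, ?_⟩
    rw [D_eq k _ b1 b2, b3, hdψ, map_sub, map_sub, sub_sub_sub_comm]
    exact (congrArg₂ _ (proj_S (k + 1) α h1 h2) (proj_S (k + 1) α' h1' h2')).symm
  · intro φ hφ
    obtain ⟨ψ, hψ⟩ := exists_add_map_mem_ker (hTdelT (k + 1)) (hnil (k + 1)) φ
    have hd0 : d (k + 2) (φ + d (k + 1) ψ) = 0 := by rw [map_add, dd, hφ, add_zero]
    obtain ⟨b1, b2, b3⟩ := S_proj (k + 1) _ hψ (by rw [hd0, map_zero])
    refine ⟨_, b1, b2, ?_, ψ, ?_⟩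
    · rw [D_eq (k + 1) _ b1 b2, b3, hd0, map_zero, map_zero, sub_zero]
    · rw [b3, add_sub_cancel_left]
end

section
/- In the BGG setup (no assumption that d∘d = 0), let S_k and D_k be defined as usual. Then for every φ ∈ C^k with T_k(φ) = 0 and d_k(φ) = 0, setting α := Π_k(φ) ∈ Υ_k one has φ = S_k(α) and D_k(α) = 0. Consequently, the projection Π_k restricts to an injective linear map from ker T_k ∩ ker d_k into ker D_k; i.e., it identifies ker T ∩ ker d with a linear subspace of the kernel of the BGG operator D_k. -/
/-!
Since `T φ = 0`, the projection is `α = φ - T (∂ φ)`, so `φ` itself differs from `α` by an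
element of `im T`; as `d φ = 0`, it satisfies all the conditions characterizing the splitting
element `S α`. Everything else follows from uniqueness of that element. The difference `u` of two
candidates lies in `im T`, where `T ∘ ∂` is the identity, and satisfies `T (d u) = 0`; hence
`T ((d - ∂) u) = -u`, and nilpotency of `T ∘ (d - ∂)` forces `u = 0`
(`eq_zero_of_mem_range_of_nilpotent`).
-/

/-- The kernel of `T ∘ d` meets the range of `T` trivially: on this intersection the nilpotent
operator `T ∘ (d - ∂)` acts as `-1`. -/
theorem eq_zero_of_mem_range_of_nilpotent {V W : Type*} [AddCommGroup V] [Module ℝ V]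
    [AddCommGroup W] [Module ℝ W] (d del : V →ₗ[ℝ] W) (T : W →ₗ[ℝ] V)
    (hTdelT : T ∘ₗ del ∘ₗ T = T)
    (hnil : ∃ m, ((T ∘ₗ (d - del) : Module.End ℝ V)) ^ m = 0)
    (u : V) (hu : u ∈ LinearMap.range T) (hdu : T (d u) = 0) : u = 0 := by
  obtain ⟨v, rfl⟩ := hu
  obtain ⟨m, hm⟩ := hnil
  have hT : T (del (T v)) = T v := LinearMap.congr_fun hTdelT v
  have hN : (T ∘ₗ (d - del) : Module.End ℝ V) (T v) = (-1 : ℝ) • T v := by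
    simp [hdu, hT]
  have hpow : ∀ n : ℕ,
      ((T ∘ₗ (d - del) : Module.End ℝ V) ^ n) (T v) = (-1 : ℝ) ^ n • T v := by
    intro n
    induction n with
    | zero => simp
    | succ n ih => rw [pow_succ, Module.End.mul_apply, hN, map_smul, ih, smul_smul, pow_succ']
  have h := hpow m
  rw [hm, LinearMap.zero_apply] at h
  exact (smul_eq_zero.mp h.symm).resolve_left (pow_ne_zero m (by norm_num))


/-- in the BGG setup (no assumption `d∘d = 0`), if `φ ∈ C^k` satisfies
`T(φ) = 0` and `d(φ) = 0`, then for `α := Π(φ) ∈ Υ_k` one has `φ = S_k(α)` (i.e. `φ`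
satisfies the unique characterization of the splitting element of `α`) and
`D_k(α) = Π(d(φ)) = 0`. Consequently `Π` restricts to an injective map from
`ker T ∩ ker d` into the kernel of the BGG operator `D_k`.

Here the cochain spaces are indexed so that `T j : C (j+1) → C j` plays the role of
`T_{j+1}`, and the statement is placed at the level `C (k+1)`, where
`Π(φ) = φ − ∂(T(φ)) − T(∂(φ))`. -/
theorem stmt19 (C : ℕ → Type*) [∀ k, AddCommGroup (C k)] [∀ k, Module ℝ (C k)]
    (d del : ∀ k, C k →ₗ[ℝ] C (k + 1)) (T : ∀ k, C (k + 1) →ₗ[ℝ] C k)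
    -- the BGG setup
    (hdeldel : ∀ k, (del (k + 1)) ∘ₗ (del k) = 0)
    (hTT : ∀ k, (T k) ∘ₗ (T (k + 1)) = 0)
    (hTdelT : ∀ k, (T k) ∘ₗ (del k) ∘ₗ (T k) = T k)
    (hdelTdel : ∀ k, (del k) ∘ₗ (T k) ∘ₗ (del k) = del k)
    (hnil : ∀ k, ∃ m, ((T k ∘ₗ (d k - del k) : Module.End ℝ (C k))) ^ m = 0)
    -- φ ∈ ker T ∩ ker d
    (k : ℕ) (φ : C (k + 1)) (hφT : T k φ = 0) (hφd : d (k + 1) φ = 0)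
    -- α := Π_k(φ)
    (α : C (k + 1)) (hα : α = φ - del k (T k φ) - T (k + 1) (del (k + 1) φ)) :
    -- α ∈ Υ_k
    (del (k + 1) α = 0 ∧ T k α = 0) ∧
    -- φ = S_k(α): φ satisfies the characterization of the splitting element of α, and
    -- is the unique such element
    (φ - α ∈ LinearMap.range (T (k + 1)) ∧
      T (k + 1) (d (k + 1) φ) = 0 ∧
      (∀ s : C (k + 1), T k s = 0 → s - α ∈ LinearMap.range (T (k + 1)) →
        T (k + 1) (d (k + 1) s) = 0 → s = φ)) ∧
    -- D_k(α) = Π_{k+1}(d(S_k(α))) = 0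
    (d (k + 1) φ - del (k + 1) (T (k + 1) (d (k + 1) φ)) -
      T (k + 2) (del (k + 2) (d (k + 1) φ)) = 0) ∧
    -- Π_k is injective on ker T ∩ ker d
    (∀ φ' : C (k + 1), T k φ' = 0 → d (k + 1) φ' = 0 →
      φ' - del k (T k φ') - T (k + 1) (del (k + 1) φ') = α → φ' = φ) := by
  have hα' : α = φ - T (k + 1) (del (k + 1) φ) := by rw [hα, hφT, map_zero, sub_zero]
  have hmem : φ - α ∈ LinearMap.range (T (k + 1)) := ⟨del (k + 1) φ, by rw [hα']; abel⟩
  have huniq : ∀ s : C (k + 1), s - α ∈ LinearMap.range (T (k + 1)) →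
      T (k + 1) (d (k + 1) s) = 0 → s = φ := by
    intro s hs hds
    refine sub_eq_zero.mp (eq_zero_of_mem_range_of_nilpotent (d (k + 1)) (del (k + 1))
      (T (k + 1)) (hTdelT (k + 1)) (hnil (k + 1)) _ ?_ ?_)
    · simpa using Submodule.sub_mem _ hs hmem
    · simp [hds, hφd]
  refine ⟨⟨?_, ?_⟩, ⟨hmem, by simp [hφd], fun s _ => huniq s⟩, by simp [hφd], ?_⟩
  · have h : del (k + 1) (T (k + 1) (del (k + 1) φ)) = del (k + 1) φ :=
      LinearMap.congr_fun (hdelTdel (k + 1)) φ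
    rw [hα', map_sub, h, sub_self]
  · have h : T k (T (k + 1) (del (k + 1) φ)) = 0 := LinearMap.congr_fun (hTT k) _
    rw [hα', map_sub, h, hφT, sub_zero]
  · intro φ' hT' hd' hφ'
    refine huniq φ' ⟨del (k + 1) φ', ?_⟩ (by simp [hd'])
    rw [← hφ', hT', map_zero]
    abel
end
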